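/- arXiv:1701.01762 — 2 statements merged into one kernel-verified Lean document; each statement's English description precedes it below -/
import Mathlib

section
/- Let H be a group and σ an automorphism of H with σ ∘ σ = id, and let G := H × H with the automorphisms σ_G(x,y) := (σ(x), σ(y)), τ(x,y) := (y,x), and θ := σ_G ∘ τ, so θ(x,y) = (σ(y), σ(x)). Then the map (δ₁, δ₂) ↦ δ₁ · σ(δ₂)⁻¹ descends to a well-defined bijection from the double coset space G^{σ_G} \ G / G^θ onto the double coset space H^σ \ H / H^σ. Explicitly: (a) if (δ₁', δ₂') = g₁ · (δ₁, δ₂) · g₂⁻¹ with g₁ ∈ G^{σ_G} and g₂ ∈ G^θ, then δ₁' · σ(δ₂')⁻¹ ∈ H^σ · (δ₁ · σ(δ₂)⁻¹) · H^σ; (b) conversely, if δ₁' · σ(δ₂')⁻¹ ∈ H^σ · (δ₁ · σ(δ₂)⁻¹) · H^σ then (δ₁', δ₂') ∈ G^{σ_G} · (δ₁, δ₂) · G^θ; (c) every γ ∈ H arises, e.g. γ = δ₁ · σ(δ₂)⁻¹ for (δ₁, δ₂) = (γ, 1). -/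
/-!
For a homomorphism `f : N →* G`, the fibres of `ν(x, y) = x * (f y)⁻¹` on `G × N` are exactly the
left cosets of `Δ = {(f c, c)}`, and left translation by `(a, b)` turns `ν` into `a * ν * (f b)⁻¹`.
So two points lie in the same `(K × L, Δ)`-double coset iff their values under `ν` lie in the same
`(K, f(L))`-double coset. For an involution `σ` one has `{(σ c, c)} = {(c, σ c)}`, and `σ` maps its
fixed subgroup onto itself.
-/

section SplitNorm

variable {G N : Type*} [Group G] [Group N]

/-- The split norm `(x, y) ↦ x * (f y)⁻¹`, for a homomorphism `f` between possibly different
groups; an involution of a single group is the classical case. -/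
def splitNorm (f : N →* G) (δ : G × N) : G :=
  δ.1 * (f δ.2)⁻¹

/-- The twisted diagonal `{(f c, c)}` in `G × N`, the graph of `f` with its coordinates swapped. -/
def twistedDiagonal (f : N →* G) : Subgroup (G × N) :=
  f.graph.comap (MulEquiv.prodComm : G × N ≃* N × G).toMonoidHom

theorem mem_twistedDiagonal {f : N →* G} {δ : G × N} :
    δ ∈ twistedDiagonal f ↔ f δ.2 = δ.1 :=
  Iff.rfl

theorem splitNorm_mk_one (f : N →* G) (γ : G) : splitNorm f (γ, 1) = γ := by
  simp [splitNorm]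

theorem splitNorm_mul_left (f : N →* G) (g δ : G × N) :
    splitNorm f (g * δ) = g.1 * splitNorm f δ * f g.2⁻¹ := by
  simp [splitNorm, mul_assoc]

theorem splitNorm_eq_iff_inv_mul_mem (f : N →* G) {δ δ' : G × N} :
    splitNorm f δ = splitNorm f δ' ↔ δ⁻¹ * δ' ∈ twistedDiagonal f := by
  simp only [splitNorm, mem_twistedDiagonal, Prod.fst_mul, Prod.snd_mul, Prod.fst_inv,
    Prod.snd_inv, map_mul, map_inv]
  rw [eq_mul_inv_iff_mul_eq, mul_assoc, ← eq_inv_mul_iff_mul_eq]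

theorem mk_splitNorm_eq_iff (f : N →* G) (K : Subgroup G) (L : Subgroup N) {δ δ' : G × N} :
    DoubleCoset.mk K (L.map f) (splitNorm f δ) = DoubleCoset.mk K (L.map f) (splitNorm f δ') ↔
      DoubleCoset.mk (K.prod L) (twistedDiagonal f) δ =
        DoubleCoset.mk (K.prod L) (twistedDiagonal f) δ' := by
  simp only [DoubleCoset.eq]
  constructor
  · rintro ⟨a, ha, _, ⟨b, hb, rfl⟩, h⟩
    have hfibre : splitNorm f ((a, b⁻¹) * δ) = splitNorm f δ' := by
      rw [splitNorm_mul_left, inv_inv, h]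
    exact ⟨(a, b⁻¹), ⟨ha, L.inv_mem hb⟩, _, (splitNorm_eq_iff_inv_mul_mem f).1 hfibre,
      (mul_inv_cancel_left _ _).symm⟩
  · rintro ⟨g, ⟨ha, hb⟩, k, hk, rfl⟩
    have hfibre : splitNorm f (g * δ) = splitNorm f (g * δ * k) := by
      rwa [splitNorm_eq_iff_inv_mul_mem, inv_mul_cancel_left]
    exact ⟨g.1, ha, f g.2⁻¹, Subgroup.mem_map_of_mem f (L.inv_mem hb),
      hfibre.symm.trans (splitNorm_mul_left f g δ)⟩

theorem stmt4_general (f : N →* G) (K : Subgroup G) (L : Subgroup N) :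
    ∃ Φ : DoubleCoset.Quotient (K.prod L : Set (G × N)) (twistedDiagonal f) ≃
        DoubleCoset.Quotient (K : Set G) (L.map f),
      ∀ δ, Φ (DoubleCoset.mk (K.prod L) (twistedDiagonal f) δ) =
        DoubleCoset.mk K (L.map f) (splitNorm f δ) := by
  let Φ : DoubleCoset.Quotient (K.prod L : Set (G × N)) (twistedDiagonal f) →
      DoubleCoset.Quotient (K : Set G) (L.map f) :=
    Quotient.map (splitNorm f) fun _ _ h ↦
      Quotient.exact ((mk_splitNorm_eq_iff f K L).2 (Quotient.sound h))
  have hinj : Function.Injective Φ := by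
    rintro ⟨δ⟩ ⟨δ'⟩ h
    exact (mk_splitNorm_eq_iff f K L).1 h
  have hsurj : Function.Surjective Φ := by
    rintro ⟨γ⟩
    exact ⟨DoubleCoset.mk _ _ (γ, 1), congrArg (DoubleCoset.mk _ _) (splitNorm_mk_one f γ)⟩
  exact ⟨Equiv.ofBijective Φ ⟨hinj, hsurj⟩, fun _ ↦ rfl⟩

end SplitNorm

section FixedSubgroup

variable {H : Type*} [Group H]

/-- The subgroup `H^σ` of fixed points of an endomorphism `σ`. -/
def fixedSubgroup (σ : H →* H) : Subgroup H :=
  σ.eqLocus (MonoidHom.id H)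

theorem mem_fixedSubgroup {σ : H →* H} {h : H} : h ∈ fixedSubgroup σ ↔ σ h = h :=
  Iff.rfl

theorem map_fixedSubgroup (σ : H →* H) : (fixedSubgroup σ).map σ = fixedSubgroup σ := by
  ext h
  constructor
  · rintro ⟨k, hk, rfl⟩
    exact congrArg σ hk
  · exact fun hh ↦ ⟨h, hh, hh⟩

theorem mk_fixedSubgroup_eq_iff (σ : H →* H) {γ γ' : H} :
    DoubleCoset.mk (fixedSubgroup σ) (fixedSubgroup σ) γ = DoubleCoset.mk _ _ γ' ↔
      ∃ h₁ h₂, σ h₁ = h₁ ∧ σ h₂ = h₂ ∧ γ' = h₁ * γ * h₂ := by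
  simp only [DoubleCoset.eq, mem_fixedSubgroup, exists_and_left]

theorem mk_twistedDiagonal_eq_iff {σ : H →* H} (hσ : Function.Involutive σ) {δ₁ δ₂ δ₁' δ₂' : H} :
    DoubleCoset.mk ((fixedSubgroup σ).prod (fixedSubgroup σ)) (twistedDiagonal σ) (δ₁, δ₂) =
        DoubleCoset.mk _ _ (δ₁', δ₂') ↔
      ∃ a b c, σ a = a ∧ σ b = b ∧ δ₁' = a * δ₁ * c⁻¹ ∧ δ₂' = b * δ₂ * (σ c)⁻¹ := by
  rw [DoubleCoset.eq]
  constructor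
  · rintro ⟨⟨a, b⟩, ⟨ha, hb⟩, ⟨x, y⟩, hxy, h⟩
    obtain rfl : σ y = x := hxy
    obtain ⟨rfl, rfl⟩ := Prod.mk.inj h
    exact ⟨a, b, (σ y)⁻¹, ha, hb, by simp, by simp [hσ y]⟩
  · rintro ⟨a, b, c, ha, hb, rfl, rfl⟩
    exact ⟨(a, b), ⟨ha, hb⟩, (c⁻¹, (σ c)⁻¹), by simp [mem_twistedDiagonal, hσ c], rfl⟩

theorem exists_splitNorm_eq_iff (σ : H →* H) (hσ : Function.Involutive σ) {δ₁ δ₂ δ₁' δ₂' : H} :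
    (∃ h₁ h₂, σ h₁ = h₁ ∧ σ h₂ = h₂ ∧ δ₁' * (σ δ₂')⁻¹ = h₁ * (δ₁ * (σ δ₂)⁻¹) * h₂) ↔
      ∃ a b c, σ a = a ∧ σ b = b ∧ δ₁' = a * δ₁ * c⁻¹ ∧ δ₂' = b * δ₂ * (σ c)⁻¹ := by
  obtain ⟨Φ, hΦ⟩ := stmt4_general σ (fixedSubgroup σ) (fixedSubgroup σ)
  rw [← mk_twistedDiagonal_eq_iff hσ, ← Φ.apply_eq_iff_eq, hΦ, hΦ, map_fixedSubgroup,
    mk_fixedSubgroup_eq_iff]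
  rfl

end FixedSubgroup

/-- the split norm map `(δ₁,δ₂) ↦ δ₁ σ(δ₂)⁻¹` induces a bijection from
`G^{σ_G} \ (H × H) / G^θ` onto `H^σ \ H / H^σ`, where `G^{σ_G} = H^σ × H^σ` and
`G^θ = {(h, σ h)}`. Parts (a), (b), (c). -/
theorem stmt4 {H : Type*} [Group H] (σ : H ≃* H) (hσ : ∀ h, σ (σ h) = h) :
    (∀ δ₁ δ₂ δ₁' δ₂' a b c : H, σ a = a → σ b = b →
        δ₁' = a * δ₁ * c⁻¹ → δ₂' = b * δ₂ * (σ c)⁻¹ →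
        ∃ h₁ h₂ : H, σ h₁ = h₁ ∧ σ h₂ = h₂ ∧
          δ₁' * (σ δ₂')⁻¹ = h₁ * (δ₁ * (σ δ₂)⁻¹) * h₂) ∧
    (∀ δ₁ δ₂ δ₁' δ₂' h₁ h₂ : H, σ h₁ = h₁ → σ h₂ = h₂ →
        δ₁' * (σ δ₂')⁻¹ = h₁ * (δ₁ * (σ δ₂)⁻¹) * h₂ →
        ∃ a b c : H, σ a = a ∧ σ b = b ∧
          δ₁' = a * δ₁ * c⁻¹ ∧ δ₂' = b * δ₂ * (σ c)⁻¹) ∧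
    (∀ γ : H, γ = γ * (σ (1 : H))⁻¹) := by
  exact ⟨fun _ _ _ _ a b c ha hb h₁ h₂ ↦
      (exists_splitNorm_eq_iff (σ : H →* H) hσ).2 ⟨a, b, c, ha, hb, h₁, h₂⟩,
    fun _ _ _ _ h₁ h₂ e₁ e₂ h ↦
      (exists_splitNorm_eq_iff (σ : H →* H) hσ).1 ⟨h₁, h₂, e₁, e₂, h⟩,
    fun γ ↦ (splitNorm_mk_one (σ : H →* H) γ).symm⟩
end

section
/- Let G' be a group and τ an automorphism of G' with τ ∘ τ = id, and let G := G' × G' with the swap automorphism σ(x,y) := (y,x), the automorphism τ_G(x,y) := (τ(x), τ(y)), and θ := σ ∘ τ_G, so θ(x,y) = (τ(y), τ(x)). Fix δ = (δ₁, δ₂) ∈ G and set x_δ := δ₁ · τ(δ₂)⁻¹. Then every element of G_δ := {(a, b) ∈ G^σ × G^θ : a⁻¹ · δ · b = δ} has the form ((u,u), (h, τ(h))) with u, h ∈ G', and the map ((u,u), (h, τ(h))) ↦ u is a group isomorphism from G_δ onto the τ-twisted centralizer C^τ_{x_δ} := {u ∈ G' : u⁻¹ · x_δ · τ(u) = x_δ}.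 -/
/-!
The fixed subgroups `G^σ` and `G^θ` are the graphs of the identity and of `τ`, and the equation
`a⁻¹ δ b = δ` says that `(a, b)` lies on the graph of conjugation by `δ⁻¹`. Intersecting a subgroup
with the graph of a homomorphism amounts to pulling it back along the graph embedding. Doing this
once for conjugation by `δ⁻¹` and once for the identity identifies `G_δ` with the twisted
centralizer of `δ₂ τ(δ₁)⁻¹`. Since `τ` is an involution, this is also the twisted centralizer of
`τ(δ₂ τ(δ₁)⁻¹)⁻¹ = δ₁ τ(δ₂)⁻¹`.
-/

section Graph

variable {A B : Type*} [Group A] [Group B]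

/-- The first projection on the part of a subgroup `L` lying on the graph of `f`, with inverse
`a ↦ (a, f a)`. It eliminates the second coordinate. -/
def graphInfEquivComap (f : A →* B) (L : Subgroup (A × B)) :
    ↥(f.graph ⊓ L) ≃* L.comap ((MonoidHom.id A).prod f) where
  toFun p := ⟨p.1.1, by
    have p_eq : (p.1.1, f p.1.1) = p.1 := Prod.ext rfl p.2.1
    exact p_eq ▸ p.2.2⟩
  invFun a := ⟨(a, f a), rfl, a.2⟩
  left_inv p := Subtype.ext (Prod.ext rfl p.2.1)
  right_inv _ := rfl
  map_mul' _ _ := rfl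

end Graph

section TwistedEqLocus

variable {A B C : Type*} [Group A] [Group B] [Group C]

/-- The locus where `f` agrees with the conjugate of `g` by `x`, that is
`{u | (f u)⁻¹ * x * g u = x}`. Twisted centralizers are the case `f = id`; a general `f` allows
the roles of `f` and `g` to be exchanged. -/
def twistedEqLocus (f g : A →* B) (x : B) : Subgroup A :=
  f.eqLocus ((MulAut.conj x).toMonoidHom.comp g)

theorem mem_twistedEqLocus_iff_mul_eq_mul {f g : A →* B} {x : B} {u : A} :
    u ∈ twistedEqLocus f g x ↔ f u * x = x * g u :=
  eq_mul_inv_iff_mul_eq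

theorem twistedEqLocus_inv (f g : A →* B) (x : B) :
    twistedEqLocus f g x⁻¹ = twistedEqLocus g f x := by
  ext u
  rw [mem_twistedEqLocus_iff_mul_eq_mul, mem_twistedEqLocus_iff_mul_eq_mul,
    mul_inv_eq_iff_eq_mul, mul_assoc, eq_inv_mul_iff_mul_eq, eq_comm]

theorem twistedEqLocus_comp_of_injective {k : B →* C} (hk : Function.Injective k)
    (f g : A →* B) (x : B) :
    twistedEqLocus (k.comp f) (k.comp g) (k x) = twistedEqLocus f g x := by
  ext u
  simp only [mem_twistedEqLocus_iff_mul_eq_mul, MonoidHom.comp_apply, ← map_mul, hk.eq_iff]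

end TwistedEqLocus

section TwistedCentralizer

variable {G : Type*} [Group G]

/-- The `τ`-twisted centralizer `C^τ_x` of `x`: the stabilizer of `x` under `τ`-twisted
conjugation. -/
def twistedCentralizer (τ : G →* G) (x : G) : Subgroup G :=
  twistedEqLocus (MonoidHom.id G) τ x

theorem mem_twistedCentralizer {τ : G →* G} {x u : G} :
    u ∈ twistedCentralizer τ x ↔ u⁻¹ * x * τ u = x := by
  rw [mul_assoc, inv_mul_eq_iff_eq_mul, eq_comm]
  exact mem_twistedEqLocus_iff_mul_eq_mul

theorem twistedCentralizer_map_inv {τ : G →* G} (hτ : Function.Involutive τ) (x : G) :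
    twistedCentralizer τ (τ x)⁻¹ = twistedCentralizer τ x := by
  have comp_self : τ.comp τ = MonoidHom.id G := MonoidHom.ext hτ
  calc twistedEqLocus (MonoidHom.id G) τ (τ x)⁻¹
      = twistedEqLocus (τ.comp (MonoidHom.id G)) (τ.comp τ) (τ x) := by
        rw [twistedEqLocus_inv, comp_self, MonoidHom.comp_id]
    _ = twistedEqLocus (MonoidHom.id G) τ x := twistedEqLocus_comp_of_injective hτ.injective _ _ _

end TwistedCentralizer

section TwoSidedStabilizer

variable {A B G : Type*} [Group A] [Group B] [Group G]

/-- The stabilizer `G_δ` of `δ` in `H × K`, where `(a, b)` acts by `δ ↦ a⁻¹ * δ * b`. The equation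
`a⁻¹ * δ * b = δ` is encoded as `b = δ⁻¹ * a * δ`. -/
def twoSidedStabilizer (H K : Subgroup G) (δ : G) : Subgroup (G × G) :=
  (MulAut.conj δ⁻¹).toMonoidHom.graph ⊓ H.prod K

theorem mem_twoSidedStabilizer {H K : Subgroup G} {δ : G} {p : G × G} :
    p ∈ twoSidedStabilizer H K δ ↔ p.1 ∈ H ∧ p.2 ∈ K ∧ p.1⁻¹ * δ * p.2 = δ := by
  have mem_graph : p ∈ (MulAut.conj δ⁻¹).toMonoidHom.graph ↔ p.1⁻¹ * δ * p.2 = δ :=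
    calc δ⁻¹ * p.1 * δ⁻¹⁻¹ = p.2
        ↔ p.1 * δ = δ * p.2 := by rw [inv_inv, mul_assoc, inv_mul_eq_iff_eq_mul]
      _ ↔ p.1⁻¹ * δ * p.2 = δ := by rw [mul_assoc, inv_mul_eq_iff_eq_mul, eq_comm]
  rw [twoSidedStabilizer, Subgroup.mem_inf, mem_graph, Subgroup.mem_prod]
  tauto

/-- Projection to the first factor identifies `G_δ` with `H ∩ δ K δ⁻¹`. -/
def twoSidedStabilizerEquivInf (H K : Subgroup G) (δ : G) :
    twoSidedStabilizer H K δ ≃* ↥(H ⊓ K.comap (MulAut.conj δ⁻¹).toMonoidHom) :=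
  (graphInfEquivComap _ _).trans (MulEquiv.subgroupCongr rfl)

theorem comap_prod_comap_conj_graph (f g : A →* B) (δ : A × B) :
    (g.graph.comap (MulAut.conj δ⁻¹).toMonoidHom).comap ((MonoidHom.id A).prod f) =
      twistedEqLocus f g (δ.2 * (g δ.1)⁻¹) := by
  ext u
  calc g (δ.1⁻¹ * u * δ.1⁻¹⁻¹) = δ.2⁻¹ * f u * δ.2⁻¹⁻¹
      ↔ δ.2 * g (δ.1⁻¹ * u * δ.1) = f u * δ.2 := by
        rw [inv_inv, inv_inv, mul_assoc δ.2⁻¹, eq_inv_mul_iff_mul_eq]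
    _ ↔ f u * (δ.2 * (g δ.1)⁻¹) = δ.2 * (g δ.1)⁻¹ * g u := by
        rw [map_mul, map_mul, map_inv, ← mul_assoc, ← eq_mul_inv_iff_mul_eq, eq_comm, mul_assoc,
          mul_assoc]
    _ ↔ u ∈ twistedEqLocus f g (δ.2 * (g δ.1)⁻¹) := mem_twistedEqLocus_iff_mul_eq_mul.symm

/-- For graphs `H = {(u, f u)}` and `K = {(h, g h)}`, the map `((u, f u), (h, g h)) ↦ u` identifies
`G_δ` with a twisted equalizer of `f` and `g`. -/
def twoSidedStabilizerGraphEquiv (f g : A →* B) (δ : A × B) :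
    twoSidedStabilizer f.graph g.graph δ ≃* twistedEqLocus f g (δ.2 * (g δ.1)⁻¹) :=
  (twoSidedStabilizerEquivInf f.graph g.graph δ).trans <|
    (graphInfEquivComap f _).trans <|
      MulEquiv.subgroupCongr (comap_prod_comap_conj_graph f g δ)

end TwoSidedStabilizer

/-- with `G = G' × G'`, swap `σ`, `θ(x,y) = (τ y, τ x)`, and
`x_δ := δ₁ τ(δ₂)⁻¹`, every element of `G_δ` has the form `((u,u),(h,τ h))` and
`((u,u),(h,τ h)) ↦ u` is a group isomorphism from `G_δ` onto the τ-twisted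
centralizer `{u : u⁻¹ x_δ τ(u) = x_δ}`. -/
theorem stmt6 {G' : Type*} [Group G'] (τ : G' ≃* G') (hτ : ∀ g, τ (τ g) = g)
    (δ₁ δ₂ : G') :
    ∃ (S : Subgroup ((G' × G') × (G' × G'))) (C : Subgroup G'),
      (∀ p : (G' × G') × (G' × G'), p ∈ S ↔
        (p.1.2 = p.1.1) ∧ (p.2.2 = τ p.2.1) ∧
        p.1.1⁻¹ * δ₁ * p.2.1 = δ₁ ∧ p.1.2⁻¹ * δ₂ * p.2.2 = δ₂) ∧
      (∀ u : G', u ∈ C ↔ u⁻¹ * (δ₁ * (τ δ₂)⁻¹) * τ u = δ₁ * (τ δ₂)⁻¹) ∧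
      ∃ e : S ≃* C, ∀ p : S, (e p : G') = (p : (G' × G') × (G' × G')).1.1 := by
  let τ' : G' →* G' := τ.toMonoidHom
  have twist_eq : twistedCentralizer τ' (δ₂ * (τ δ₁)⁻¹) =
      twistedCentralizer τ' (δ₁ * (τ δ₂)⁻¹) := by
    have map_inv_twist : (τ (δ₂ * (τ δ₁)⁻¹))⁻¹ = δ₁ * (τ δ₂)⁻¹ := by
      rw [map_mul, map_inv, hτ, mul_inv_rev, inv_inv]
    rw [← map_inv_twist]
    exact (twistedCentralizer_map_inv (τ := τ') hτ _).symm
  refine ⟨twoSidedStabilizer (MonoidHom.id G').graph τ'.graph (δ₁, δ₂),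
    twistedCentralizer τ' (δ₁ * (τ δ₂)⁻¹), fun p => ?_, fun _ => mem_twistedCentralizer,
    (twoSidedStabilizerGraphEquiv _ _ _).trans (MulEquiv.subgroupCongr twist_eq), fun _ => rfl⟩
  rw [mem_twoSidedStabilizer, MonoidHom.mem_graph, MonoidHom.mem_graph, Prod.ext_iff,
    eq_comm (b := p.1.2), eq_comm (b := p.2.2)]
  rfl
end
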